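/- arXiv:2309.07004 — 2 statements merged into one kernel-verified Lean document; each statement's English description precedes it below -/
import Mathlib

section
/- There exist a radius r > 0 and real sequences (a_j)_{j≥1}, (b_j)_{j≥1} such that the power series ∑_{j≥1} a_j s^j and ∑_{j≥1} b_j s^j converge absolutely for 0 < s < r, and for all s ∈ (0, r): F(s) = −(1/2) log s + log 8 − 2 + ∑_{j≥1} (a_j s^j + b_j s^j log s), where F(s) = ∫_0^π cos(t)/√(2(1 − cos t) + s) dt. -/
/-- The profile function of the fundamental solution of `div((1/r)∇·)`. -/
noncomputable def Fprof (s : ℝ) : ℝ :=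
  ∫ t in (0 : ℝ)..Real.pi, Real.cos t / Real.sqrt (2 * (1 - Real.cos t) + s)

open Filter Topology in
theorem aux_R_pos {s : ℝ} (hs : 0 < s) (t : ℝ) : 0 < 2 * (1 - Real.cos t) + s := by
  have := Real.cos_le_one t
  linarith

theorem aux_cont (p : ℝ) {s : ℝ} (hs : 0 < s) :
    Continuous (fun t => Real.cos t * (2 * (1 - Real.cos t) + s) ^ p) := by
  refine Real.continuous_cos.mul (Continuous.rpow_const (by fun_prop) ?_)
  intro t
  exact Or.inl (aux_R_pos hs t).ne'

noncomputable def auxG (p s : ℝ) : ℝ :=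
  ∫ t in (0 : ℝ)..Real.pi, Real.cos t * (2 * (1 - Real.cos t) + s) ^ p

theorem auxG_deriv {p : ℝ} (hp : p ≤ 1) {s : ℝ} (hs : 0 < s) :
    HasDerivAt (auxG p) (p * auxG (p - 1) s) s := by
  have h := intervalIntegral.hasDerivAt_integral_of_dominated_loc_of_deriv_le
    (μ := MeasureTheory.volume) (a := 0) (b := Real.pi)
    (bound := fun _ => |p| * (s / 2) ^ (p - 1))
    (F := fun x t => Real.cos t * (2 * (1 - Real.cos t) + x) ^ p)
    (F' := fun x t => p * (Real.cos t * (2 * (1 - Real.cos t) + x) ^ (p - 1)))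
    (x₀ := s) (s := Set.Ioi (s / 2)) (Ioi_mem_nhds (by linarith))
    (by
      filter_upwards [Ioi_mem_nhds hs] with x hx
      exact (aux_cont p hx).aestronglyMeasurable)
    ((aux_cont p hs).intervalIntegrable _ _)
    ((aux_cont (p - 1) hs).const_mul p).aestronglyMeasurable
    (by
      refine Filter.Eventually.of_forall fun t _ x hx => ?_
      have hx' : s / 2 < x := hx
      have h0 := Real.cos_le_one t
      rw [norm_mul, norm_mul, Real.norm_eq_abs, Real.norm_eq_abs, Real.norm_eq_abs]
      refine mul_le_mul_of_nonneg_left ?_ (abs_nonneg _)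
      have h1 : (2 * (1 - Real.cos t) + x) ^ (p - 1) ≤ (s / 2) ^ (p - 1) :=
        Real.rpow_le_rpow_of_nonpos (by linarith) (by linarith) (by linarith)
      have h2 : 0 ≤ (2 * (1 - Real.cos t) + x) ^ (p - 1) :=
        Real.rpow_nonneg (by linarith) _
      rw [abs_of_nonneg h2]
      calc _ ≤ 1 * (2 * (1 - Real.cos t) + x) ^ (p - 1) :=
            mul_le_mul_of_nonneg_right (Real.abs_cos_le_one t) h2
        _ ≤ _ := by linarith)
    (by simp)
    (by
      refine Filter.Eventually.of_forall fun t _ x hx => ?_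
      have hx' : s / 2 < x := hx
      have h0 := Real.cos_le_one t
      have h1 : HasDerivAt (fun x : ℝ => 2 * (1 - Real.cos t) + x) 1 x :=
        (hasDerivAt_id x).const_add _
      have h2 := (h1.rpow_const (p := p) (Or.inl (by linarith : (0:ℝ) < _).ne')).const_mul
        (Real.cos t)
      refine HasDerivAt.congr_deriv h2 ?_
      ring)
  have h2 := h.2
  rw [intervalIntegral.integral_const_mul] at h2
  exact h2

theorem Fprof_eq {s : ℝ} (hs : 0 < s) : Fprof s = auxG (-1/2) s := by
  unfold Fprof auxG
  congr 1
  ext t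
  have h := aux_R_pos hs t
  rw [show (-1/2 : ℝ) = -(1/2) by norm_num, Real.rpow_neg h.le, ← Real.sqrt_eq_rpow, div_eq_mul_inv]

theorem auxG_ode {s : ℝ} (hs : 0 < s) :
    s * (4 + s) * ((3 / 4) * auxG (-5/2) s) + (4 + 2 * s) * (-1/2 * auxG (-3/2) s)
      - 3 / 4 * auxG (-1/2) s = 0 := by
  have hint : ∀ p : ℝ, IntervalIntegrable
      (fun t => Real.cos t * (2 * (1 - Real.cos t) + s) ^ p) MeasureTheory.volume 0 Real.pi :=
    fun p => (aux_cont p hs).intervalIntegrable _ _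
  have hV : ∀ t : ℝ, HasDerivAt (fun t => Real.cos t * Real.sin t *
      (2 * (1 - Real.cos t) + s) ^ (-3/2 : ℝ) - Real.sin t * (2 * (1 - Real.cos t) + s) ^ (-1/2 : ℝ))
      (s * (4 + s) * ((3 / 4) * (Real.cos t * (2 * (1 - Real.cos t) + s) ^ (-5/2 : ℝ)))
        + (4 + 2 * s) * (-1/2 * (Real.cos t * (2 * (1 - Real.cos t) + s) ^ (-3/2 : ℝ)))
        - 3 / 4 * (Real.cos t * (2 * (1 - Real.cos t) + s) ^ (-1/2 : ℝ))) t := by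
    intro t
    have hR := aux_R_pos hs t
    have h1 : HasDerivAt (fun t : ℝ => 2 * (1 - Real.cos t) + s) (2 * Real.sin t) t := by
      have := (((Real.hasDerivAt_cos t).const_sub 1).const_mul 2).add_const s
      refine HasDerivAt.congr_deriv this ?_
      ring
    have h3 := h1.rpow_const (p := (-3/2 : ℝ)) (Or.inl hR.ne')
    have h2 := h1.rpow_const (p := (-1/2 : ℝ)) (Or.inl hR.ne')
    have := (((Real.hasDerivAt_cos t).mul (Real.hasDerivAt_sin t)).mul h3).sub
      ((Real.hasDerivAt_sin t).mul h2)
    refine HasDerivAt.congr_deriv this ?_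
    rw [show (-3/2 - 1 : ℝ) = -5/2 by norm_num, show (-1/2 - 1 : ℝ) = -3/2 by norm_num]
    simp only [Pi.mul_apply]
    have e1 : (2 * (1 - Real.cos t) + s) ^ (-3/2 : ℝ)
        = (2 * (1 - Real.cos t) + s) * (2 * (1 - Real.cos t) + s) ^ (-5/2 : ℝ) := by
      rw [← Real.rpow_one_add' hR.le (by norm_num)]; norm_num
    have e2 : (2 * (1 - Real.cos t) + s) ^ (-1/2 : ℝ)
        = (2 * (1 - Real.cos t) + s) * (2 * (1 - Real.cos t) + s) ^ (-3/2 : ℝ) := by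
      rw [← Real.rpow_one_add' hR.le (by norm_num)]; norm_num
    rw [e2, e1]
    have hsc := Real.sin_sq_add_cos_sq t
    generalize (2 * (1 - Real.cos t) + s) ^ (-5/2 : ℝ) = X
    have hs2 : Real.sin t ^ 2 = 1 - Real.cos t ^ 2 := by linarith
    generalize Real.cos t = c at *
    generalize Real.sin t = y at *
    ring_nf
    rw [hs2]
    ring
  have hI := intervalIntegral.integral_eq_sub_of_hasDerivAt (a := 0) (b := Real.pi)
    (fun t _ => hV t)
    ((((((hint _).const_mul _)).const_mul _).add (((hint _).const_mul _).const_mul _)).sub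
      ((hint _).const_mul _))
  rw [intervalIntegral.integral_sub
      ((((hint _).const_mul _).const_mul _).add (((hint _).const_mul _).const_mul _))
      ((hint _).const_mul _),
    intervalIntegral.integral_add (((hint _).const_mul _).const_mul _)
      (((hint _).const_mul _).const_mul _)] at hI
  simp only [intervalIntegral.integral_const_mul] at hI
  simp only [Real.sin_pi, Real.sin_zero, mul_zero, zero_mul, sub_zero] at hI
  exact hI

theorem aux_g_cos (t : ℝ) (ht0 : 0 ≤ t) (ht : t ≤ Real.pi) : 0 < Real.cos (t / 4) :=
  Real.cos_pos_of_mem_Ioo ⟨by linarith [Real.pi_pos], by linarith [Real.pi_pos]⟩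

theorem aux_g_eq (t : ℝ) (ht0 : 0 ≤ t) (ht : t ≤ Real.pi) :
    Real.cos t - Real.cos (t / 2) =
      (1 / 2 * (Real.sin (t / 4) / Real.cos (t / 4)) - Real.sin (t / 2)) * (2 * Real.sin (t / 2)) := by
  have h := aux_g_cos t ht0 ht
  have e1 : Real.cos t = 2 * Real.cos (t / 2) ^ 2 - 1 := by
    rw [← Real.cos_two_mul]; ring_nf
  have e2 : Real.cos (t / 2) = 2 * Real.cos (t / 4) ^ 2 - 1 := by
    rw [← Real.cos_two_mul]; ring_nf
  have e3 : Real.sin (t / 2) = 2 * Real.sin (t / 4) * Real.cos (t / 4) := by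
    rw [← Real.sin_two_mul]; ring_nf
  rw [e1, e2, e3]
  have hsc := Real.sin_sq_add_cos_sq (t / 4)
  have hs2 : Real.sin (t / 4) ^ 2 = 1 - Real.cos (t / 4) ^ 2 := by linarith
  field_simp
  rw [show Real.sin (t / 4) ^ 2 = 1 - Real.cos (t / 4) ^ 2 by linarith]
  ring

theorem aux_g_cont : ContinuousOn
    (fun t => 1 / 2 * (Real.sin (t / 4) / Real.cos (t / 4)) - Real.sin (t / 2))
    (Set.uIcc 0 Real.pi) := by
  rw [Set.uIcc_of_le Real.pi_pos.le]
  refine ContinuousOn.sub (continuousOn_const.mul (ContinuousOn.div (by fun_prop) (by fun_prop) ?_))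
    (by fun_prop)
  intro t ht
  exact (aux_g_cos t ht.1 ht.2).ne'

theorem aux_g_int : ∫ t in (0:ℝ)..Real.pi,
    (1 / 2 * (Real.sin (t / 4) / Real.cos (t / 4)) - Real.sin (t / 2)) = Real.log 2 - 2 := by
  rw [intervalIntegral.integral_eq_sub_of_hasDerivAt
    (f := fun t => -2 * Real.log (Real.cos (t / 4)) + 2 * Real.cos (t / 2))]
  · have e : Real.log (Real.cos (Real.pi / 4)) = - (1/2) * Real.log 2 := by
      rw [Real.cos_pi_div_four, Real.log_div (by positivity) (by positivity), Real.log_sqrt (by positivity)]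
      ring
    simp only [e]
    simp
  · intro t ht
    rw [Set.uIcc_of_le Real.pi_pos.le] at ht
    have h := aux_g_cos t ht.1 ht.2
    have h4 : HasDerivAt (fun t : ℝ => t / 4) (1 / 4) t := (hasDerivAt_id t).div_const 4
    have h2 : HasDerivAt (fun t : ℝ => t / 2) (1 / 2) t := (hasDerivAt_id t).div_const 2
    have := (((h4.cos).log h.ne').const_mul (-2)).add ((h2.cos).const_mul 2)
    refine HasDerivAt.congr_deriv this ?_
    field_simp
    ring
  · exact aux_g_cont.intervalIntegrable

open Filter Topology in
theorem Fprof_split {s : ℝ} (hs : 0 < s) :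
    Fprof s = Real.arsinh (2 / √s) + ∫ t in (0:ℝ)..Real.pi,
      (1 / 2 * (Real.sin (t / 4) / Real.cos (t / 4)) - Real.sin (t / 2)) *
        (2 * Real.sin (t / 2) / √(2 * (1 - Real.cos t) + s)) := by
  have hc : ∀ t : ℝ, √(2 * (1 - Real.cos t) + s) ≠ 0 := fun t =>
    (Real.sqrt_pos.2 (aux_R_pos hs t)).ne'
  have hA : ∫ t in (0:ℝ)..Real.pi, Real.cos (t / 2) / √(2 * (1 - Real.cos t) + s)
      = Real.arsinh (2 / √s) := by
    rw [intervalIntegral.integral_eq_sub_of_hasDerivAt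
      (f := fun t => Real.arsinh (2 * Real.sin (t / 2) / √s))]
    · simp
    · intro t _
      have h2 : HasDerivAt (fun t : ℝ => t / 2) (1 / 2) t := (hasDerivAt_id t).div_const 2
      have := ((h2.sin.const_mul 2).div_const √s).arsinh
      refine HasDerivAt.congr_deriv this ?_
      have hss : 0 < √s := Real.sqrt_pos.2 hs
      have e : √(2 * (1 - Real.cos t) + s) = √(1 + (2 * Real.sin (t / 2) / √s) ^ 2) * √s := by
        rw [← Real.sqrt_mul (by positivity)]
        congr 1
        rw [add_mul, div_pow, Real.sq_sqrt hs.le, div_mul_cancel₀ _ hs.ne']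
        have e1 : Real.cos t = 2 * Real.cos (t / 2) ^ 2 - 1 := by
          rw [← Real.cos_two_mul]; ring_nf
        rw [e1]
        have := Real.sin_sq_add_cos_sq (t / 2)
        linear_combination (-4) * this
      rw [e, smul_eq_mul]
      have : 0 < √(1 + (2 * Real.sin (t / 2) / √s) ^ 2) := Real.sqrt_pos.2 (by positivity)
      field_simp
    · apply Continuous.intervalIntegrable
      exact Continuous.div (by fun_prop) (by fun_prop) hc
  rw [← hA, ← intervalIntegral.integral_add]
  · unfold Fprof
    apply intervalIntegral.integral_congr
    intro t ht
    rw [Set.uIcc_of_le Real.pi_pos.le] at ht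
    have := aux_g_eq t ht.1 ht.2
    simp only
    rw [mul_div_assoc', ← this, ← add_div]
    ring_nf
  · apply Continuous.intervalIntegrable
    exact Continuous.div (by fun_prop) (by fun_prop) hc
  · apply ContinuousOn.intervalIntegrable
    exact aux_g_cont.mul (Continuous.div (by fun_prop) (by fun_prop) hc).continuousOn

open Filter Topology in
theorem Fprof_asymp : Tendsto (fun s => Fprof s + 1 / 2 * Real.log s) (𝓝[>] 0)
    (𝓝 (Real.log 8 - 2)) := by
  have hI : Tendsto (fun s => ∫ t in (0:ℝ)..Real.pi,
      (1 / 2 * (Real.sin (t / 4) / Real.cos (t / 4)) - Real.sin (t / 2)) *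
        (2 * Real.sin (t / 2) / √(2 * (1 - Real.cos t) + s))) (𝓝[>] 0) (𝓝 (∫ t in (0:ℝ)..Real.pi,
    (1 / 2 * (Real.sin (t / 4) / Real.cos (t / 4)) - Real.sin (t / 2)))) := by
    have hsq : ∀ t : ℝ, 2 * (1 - Real.cos t) = (2 * Real.sin (t / 2)) ^ 2 := by
      intro t
      have e1 : Real.cos t = 2 * Real.cos (t / 2) ^ 2 - 1 := by
        rw [← Real.cos_two_mul]; ring_nf
      rw [e1]
      linear_combination (-4) * Real.sin_sq_add_cos_sq (t / 2)
    apply intervalIntegral.tendsto_integral_filter_of_dominated_convergence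
      (fun t => |1 / 2 * (Real.sin (t / 4) / Real.cos (t / 4)) - Real.sin (t / 2)|)
    · filter_upwards [self_mem_nhdsWithin] with s hs
      have hs' : 0 < s := hs
      apply ContinuousOn.aestronglyMeasurable _ measurableSet_uIoc
      refine (aux_g_cont.mul (Continuous.div (by fun_prop) (by fun_prop) (fun t =>
        (Real.sqrt_pos.2 (aux_R_pos hs' t)).ne')).continuousOn).mono Set.uIoc_subset_uIcc
    · filter_upwards [self_mem_nhdsWithin] with s hs
      have hs' : 0 < s := hs
      refine Eventually.of_forall fun t _ => ?_
      rw [norm_mul, Real.norm_eq_abs, Real.norm_eq_abs]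
      refine mul_le_of_le_one_right (abs_nonneg _) ?_
      rw [abs_div, abs_of_nonneg (Real.sqrt_nonneg _)]
      rw [div_le_one (Real.sqrt_pos.2 (aux_R_pos hs' t))]
      apply Real.le_sqrt_of_sq_le
      rw [sq_abs, hsq]
      linarith
    · exact (aux_g_cont.abs).intervalIntegrable
    · refine Eventually.of_forall fun t ht => ?_
      rw [Set.uIoc_of_le Real.pi_pos.le] at ht
      have hpos : 0 < 2 * Real.sin (t / 2) := by
        have := Real.sin_pos_of_pos_of_lt_pi (x := t / 2) (by linarith [ht.1])
          (by linarith [ht.2, Real.pi_pos])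
        linarith
      have hcont : ContinuousAt (fun s : ℝ =>
        (1 / 2 * (Real.sin (t / 4) / Real.cos (t / 4)) - Real.sin (t / 2)) *
        (2 * Real.sin (t / 2) / √(2 * (1 - Real.cos t) + s))) 0 := by
        refine continuousAt_const.mul (ContinuousAt.div continuousAt_const (by fun_prop) ?_)
        rw [hsq, add_zero, Real.sqrt_sq hpos.le]
        exact hpos.ne'
      have h := hcont.tendsto
      rw [hsq, add_zero, Real.sqrt_sq hpos.le, div_self hpos.ne', mul_one, ← hsq] at h
      exact h.mono_left nhdsWithin_le_nhds
  rw [aux_g_int] at hI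
  have hL : Tendsto (fun s : ℝ => Real.log (2 + √(4 + s))) (𝓝[>] 0) (𝓝 (Real.log 4)) := by
    have hcont : ContinuousAt (fun s : ℝ => Real.log (2 + √(4 + s))) 0 := by
      refine ContinuousAt.log (by fun_prop) ?_
      positivity
    have h := hcont.tendsto
    rw [add_zero, show √(4:ℝ) = 2 by rw [show (4:ℝ) = 2 ^ 2 by norm_num]; exact Real.sqrt_sq (by norm_num),
      show (2 + 2 : ℝ) = 4 by norm_num] at h
    exact h.mono_left nhdsWithin_le_nhds
  have hsum := hL.add hI
  have e8 : Real.log 4 + (Real.log 2 - 2) = Real.log 8 - 2 := by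
    rw [show (8:ℝ) = 4 * 2 by norm_num, Real.log_mul (by norm_num) (by norm_num)]
    ring
  rw [e8] at hsum
  refine hsum.congr' ?_
  filter_upwards [self_mem_nhdsWithin] with s hs
  have hs' : 0 < s := hs
  rw [Fprof_split hs']
  have hss : 0 < √s := Real.sqrt_pos.2 hs'
  have ea : Real.arsinh (2 / √s) = Real.log (2 + √(4 + s)) - 1 / 2 * Real.log s := by
    unfold Real.arsinh
    have e1 : √(1 + (2 / √s) ^ 2) = √(4 + s) / √s := by
      rw [← Real.sqrt_div (by positivity)]
      congr 1
      rw [div_pow, Real.sq_sqrt hs'.le]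
      field_simp
      ring
    rw [e1, ← add_div, Real.log_div (by positivity) hss.ne', Real.log_sqrt hs'.le]
    ring
  rw [ea]
  ring

def auxPG (c : ℕ → ℝ) : Prop := ∃ (M : ℝ) (k : ℕ), ∀ n : ℕ, |c n| ≤ M * ((n : ℝ) + 1) ^ k

noncomputable def auxps (c : ℕ → ℝ) (s : ℝ) : ℝ := ∑' n, c n * s ^ n

def auxdc (c : ℕ → ℝ) : ℕ → ℝ := fun n => ((n : ℝ) + 1) * c (n + 1)

theorem auxPG_nonneg {c : ℕ → ℝ} {M : ℝ} {k : ℕ}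
    (h : ∀ n : ℕ, |c n| ≤ M * ((n : ℝ) + 1) ^ k) : 0 ≤ M := by
  have := h 0
  simp at this
  exact (abs_nonneg _).trans this

theorem auxPG_shift {c : ℕ → ℝ} (hc : auxPG c) : auxPG (fun n => c (n + 1)) := by
  obtain ⟨M, k, h⟩ := hc
  have hM := auxPG_nonneg h
  refine ⟨M * 2 ^ k, k, fun n => (h (n + 1)).trans ?_⟩
  rw [mul_assoc, ← mul_pow]
  gcongr
  push_cast
  have : (0:ℝ) ≤ n := n.cast_nonneg
  linarith

theorem auxPG_dc {c : ℕ → ℝ} (hc : auxPG c) : auxPG (auxdc c) := by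
  obtain ⟨M, k, h⟩ := auxPG_shift hc
  refine ⟨M, k + 1, fun n => ?_⟩
  unfold auxdc
  have hn : (0:ℝ) ≤ (n:ℝ) + 1 := by positivity
  rw [abs_mul, abs_of_nonneg hn]
  calc ((n:ℝ) + 1) * |c (n + 1)| ≤ ((n:ℝ) + 1) * (M * ((n : ℝ) + 1) ^ k) :=
        mul_le_mul_of_nonneg_left (h n) hn
    _ = _ := by ring

theorem auxPG_summable {c : ℕ → ℝ} (hc : auxPG c) {s : ℝ} (hs : |s| < 1) :
    Summable (fun n => |c n * s ^ n|) := by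
  obtain ⟨M, k, h⟩ := hc
  have hM := auxPG_nonneg h
  rcases eq_or_ne s 0 with rfl | h0
  · apply summable_of_ne_finset_zero (s := {0})
    intro n hn
    simp at hn
    simp [hn]
  have h1 : Summable (fun n : ℕ => (n : ℝ) ^ k * |s| ^ n) :=
    summable_pow_mul_geometric_of_norm_lt_one k (by simpa using hs)
  have h2 := (summable_nat_add_iff 1).2 h1
  refine Summable.of_nonneg_of_le (fun _ => abs_nonneg _) (fun n => ?_) (h2.mul_left (M / |s|))
  have hs0 : 0 < |s| := abs_pos.2 h0
  rw [abs_mul, abs_pow]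
  calc |c n| * |s| ^ n ≤ M * ((n : ℝ) + 1) ^ k * |s| ^ n := by gcongr; exact h n
    _ = _ := by push_cast; field_simp; ring

theorem auxPG_hasSum {c : ℕ → ℝ} (hc : auxPG c) {s : ℝ} (hs : |s| < 1) :
    HasSum (fun n => c n * s ^ n) (auxps c s) :=
  (auxPG_summable hc hs).of_abs.hasSum

theorem auxps_deriv {c : ℕ → ℝ} (hc : auxPG c) {s : ℝ} (hs : |s| < 1) :
    HasDerivAt (auxps c) (auxps (auxdc c) s) s := by
  obtain ⟨ρ, h1, h2⟩ := exists_between hs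
  have hρ : 0 < ρ := (abs_nonneg s).trans_lt h1
  have hd := auxPG_summable (auxPG_dc hc) (s := ρ) (by rwa [abs_of_pos hρ])
  have hmem : ∀ y : ℝ, y ∈ Set.Ioo (-ρ) ρ ↔ |y| < ρ := fun y => abs_lt.symm
  have key : ∀ (n : ℕ) (y : ℝ), c (n + 1) * (((n + 1 : ℕ) : ℝ) * y ^ (n + 1 - 1))
      = auxdc c n * y ^ n := by
    intro n y
    simp only [auxdc, Nat.add_sub_cancel]
    push_cast
    ring
  have hu : Summable (fun n : ℕ => |c n * ((n : ℝ) * ρ ^ (n - 1))|) := by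
    rw [← summable_nat_add_iff 1]
    refine hd.congr fun n => ?_
    rw [key]
  have := hasDerivAt_tsum_of_isPreconnected (𝕜 := ℝ) (F := ℝ)
    (g := fun n y => c n * y ^ n) (g' := fun n y => c n * ((n : ℝ) * y ^ (n - 1)))
    (t := Set.Ioo (-ρ) ρ) (y₀ := 0) (y := s) hu isOpen_Ioo isPreconnected_Ioo
    (fun n y _ => (hasDerivAt_pow n y).const_mul (c n))
    (fun n y hy => by
      rw [Real.norm_eq_abs, abs_mul, abs_mul, abs_mul, abs_mul, abs_pow, abs_pow, abs_of_pos hρ]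
      have := ((hmem y).1 hy).le
      gcongr)
    ((hmem 0).2 (by simpa using hρ))
    ((auxPG_summable hc (by simp)).of_abs)
    ((hmem s).2 h1)
  refine HasDerivAt.congr_deriv this ?_
  have hsum : Summable (fun n : ℕ => c n * ((n : ℝ) * s ^ (n - 1))) := by
    rw [← summable_nat_add_iff 1]
    refine ((auxPG_summable (auxPG_dc hc) hs).of_abs).congr fun n => ?_
    rw [key]
  rw [hsum.tsum_eq_zero_add]
  simp only [key]
  simp [auxps]

theorem aux_shift {d e : ℕ → ℝ} {s x : ℝ} (h : HasSum (fun n => d n * s ^ n) x)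
    (h0 : e 0 = 0) (h1 : ∀ n, e (n + 1) = d n) : HasSum (fun n => e n * s ^ n) (s * x) := by
  rw [← hasSum_nat_add_iff' 1]
  simp only [Finset.sum_range_one, h0, zero_mul, sub_zero, h1]
  refine (h.mul_left s).congr_fun ?_ 
  intro n
  ring

noncomputable def auxp : ℕ → ℝ
  | 0 => 1
  | n + 1 => (3 / 4 - n * (n + 1)) / (4 * ((n:ℝ) + 1) ^ 2) * auxp n

noncomputable def auxq : ℕ → ℝ
  | 0 => 0
  | n + 1 => ((3 / 4 - n * (n + 1)) * auxq n - 8 * (n + 1) * auxp (n + 1)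
      - (2 * n + 1) * auxp n) / (4 * ((n:ℝ) + 1) ^ 2)

theorem auxratio (n : ℕ) : |(3 / 4 - n * ((n:ℝ) + 1)) / (4 * ((n:ℝ) + 1) ^ 2)| ≤ 1 / 4 := by
  have hn : (0:ℝ) ≤ n := n.cast_nonneg
  rw [abs_div, abs_of_pos (show (0:ℝ) < 4 * ((n:ℝ) + 1) ^ 2 by positivity),
    div_le_iff₀ (by positivity), abs_le]
  constructor <;> nlinarith

theorem auxp_le (n : ℕ) : |auxp n| ≤ 1 := by
  induction n with
  | zero => simp [auxp]
  | succ n ih =>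
    rw [auxp, abs_mul]
    have := auxratio n
    have := mul_le_mul this ih (abs_nonneg _) (by norm_num)
    linarith

theorem auxq_le (n : ℕ) : |auxq n| ≤ 4 := by
  induction n with
  | zero => simp [auxq]
  | succ n ih =>
    have hn : (0:ℝ) ≤ n := n.cast_nonneg
    have hD : (0:ℝ) < 4 * ((n:ℝ) + 1) ^ 2 := by positivity
    have e : auxq (n + 1) = (3 / 4 - n * ((n:ℝ) + 1)) / (4 * ((n:ℝ) + 1) ^ 2) * auxq n
      - (8 * (n + 1) * auxp (n + 1) + (2 * n + 1) * auxp n) / (4 * ((n:ℝ) + 1) ^ 2) := by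
      rw [auxq]; ring
    have h1 : |(8 * (n + 1) * auxp (n + 1) + (2 * n + 1) * auxp n) / (4 * ((n:ℝ) + 1) ^ 2)|
        ≤ 10 / 4 := by
      rw [abs_div, abs_of_pos hD, div_le_iff₀ hD]
      have a1 := abs_le.1 (auxp_le (n + 1))
      have a2 := abs_le.1 (auxp_le n)
      rw [abs_le]
      constructor <;> nlinarith
    have h2 := mul_le_mul (auxratio n) ih (abs_nonneg _) (by norm_num)
    rw [← abs_mul] at h2
    rw [e]
    refine (abs_sub _ _).trans ?_
    linarith

theorem auxPG_p : auxPG auxp := ⟨1, 0, fun n => by simpa using auxp_le n⟩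
theorem auxPG_q : auxPG auxq := ⟨4, 0, fun n => by simpa using auxq_le n⟩

/-- the coefficient expansion of the differential operator -/
theorem aux_op {c : ℕ → ℝ} (hc : auxPG c) {s : ℝ} (hs : |s| < 1) :
    HasSum (fun n : ℕ => (4 * ((n:ℝ) + 1) ^ 2 * c (n + 1) + (n * ((n:ℝ) + 1) - 3 / 4) * c n) * s ^ n)
      (s * (4 + s) * auxps (auxdc (auxdc c)) s + (4 + 2 * s) * auxps (auxdc c) s
        - 3 / 4 * auxps c s) := by
  have hB := auxPG_hasSum hc hs
  have hB1 := auxPG_hasSum (auxPG_dc hc) hs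
  have hB2 := auxPG_hasSum (auxPG_dc (auxPG_dc hc)) hs
  have h1 := aux_shift (e := fun n => n * c n) hB1 (by simp)
    (fun n => by simp only [auxdc]; push_cast; ring)
  have h2 := aux_shift (e := fun n => n * (((n:ℝ) + 1) * c (n + 1))) hB2 (by simp)
    (fun n => by simp only [auxdc]; push_cast; ring)
  have h3 := aux_shift (e := fun n => n * ((n:ℝ) - 1) * c n) h2 (by simp)
    (fun n => by push_cast; ring)
  have := ((((h2.mul_left 4).add h3).add (hB1.mul_left 4)).add (h1.mul_left 2)).sub
    (hB.mul_left (3 / 4))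
  have e : (fun n : ℕ => (4 * ((n:ℝ) + 1) ^ 2 * c (n + 1) + (n * ((n:ℝ) + 1) - 3 / 4) * c n) * s ^ n)
      = fun b : ℕ => 4 * (b * (((b:ℝ) + 1) * c (b + 1)) * s ^ b) + b * ((b:ℝ) - 1) * c b * s ^ b
        + 4 * (auxdc c b * s ^ b) + 2 * (b * c b * s ^ b) - 3 / 4 * (c b * s ^ b) := by
    ext n
    simp only [auxdc]
    ring
  have e2 : s * (4 + s) * auxps (auxdc (auxdc c)) s + (4 + 2 * s) * auxps (auxdc c) s
      - 3 / 4 * auxps c s = 4 * (s * auxps (auxdc (auxdc c)) s)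
        + s * (s * auxps (auxdc (auxdc c)) s) + 4 * auxps (auxdc c) s
        + 2 * (s * auxps (auxdc c) s) - 3 / 4 * auxps c s := by
    ring
  rw [e, e2]
  exact this

theorem auxp_ode {s : ℝ} (hs : |s| < 1) :
    s * (4 + s) * auxps (auxdc (auxdc auxp)) s + (4 + 2 * s) * auxps (auxdc auxp) s
        - 3 / 4 * auxps auxp s = 0 := by
  refine (aux_op auxPG_p hs).unique ?_
  convert hasSum_zero using 2 with n
  rw [auxp]
  have : (0:ℝ) < (n:ℝ) + 1 := by positivity
  field_simp
  ring

theorem auxq_ode {s : ℝ} (hs : |s| < 1) :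
    s * (4 + s) * auxps (auxdc (auxdc auxq)) s + (4 + 2 * s) * auxps (auxdc auxq) s
        - 3 / 4 * auxps auxq s + (8 + 2 * s) * auxps (auxdc auxp) s + auxps auxp s = 0 := by
  have hB := auxPG_hasSum auxPG_p hs
  have hB1 := auxPG_hasSum (auxPG_dc auxPG_p) hs
  have h1 := aux_shift (e := fun n => n * auxp n) hB1 (by simp)
    (fun n => by simp only [auxdc]; push_cast; ring)
  have := (((aux_op auxPG_q hs).add (hB1.mul_left 8)).add (h1.mul_left 2)).add hB
  have h0 := this.unique (a₂ := 0) (by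
    convert hasSum_zero using 2 with n
    simp only [auxdc]
    rw [auxq]
    have : (0:ℝ) < (n:ℝ) + 1 := by positivity
    field_simp
    ring)
  linarith

theorem auxps_zero (c : ℕ → ℝ) : auxps c 0 = c 0 := by
  unfold auxps
  rw [tsum_eq_single 0]
  · simp
  · intro n hn
    simp [hn]

/-- Wronskian-type constant of the analytic parts -/
theorem aux_K {s : ℝ} (hs : |s| < 1) :
    (4 + s) * (auxps auxp s ^ 2 + s * (auxps (auxdc auxq) s * auxps auxp s
      - auxps auxq s * auxps (auxdc auxp) s)) = 4 := by
  have hder : ∀ x ∈ Set.Ioo (-1:ℝ) 1, HasDerivAt (fun s => (4 + s) * (auxps auxp s ^ 2 + s * (auxps (auxdc auxq) s * auxps auxp s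
      - auxps auxq s * auxps (auxdc auxp) s))) 0 x := by
    intro x hx
    have hx' : |x| < 1 := abs_lt.2 hx
    have b0 := auxps_deriv auxPG_p hx'
    have b1 := auxps_deriv (auxPG_dc auxPG_p) hx'
    have c0 := auxps_deriv auxPG_q hx'
    have c1 := auxps_deriv (auxPG_dc auxPG_q) hx'
    have o1 := auxp_ode hx'
    have o2 := auxq_ode hx'
    refine HasDerivAt.congr_deriv (((hasDerivAt_id x).const_add 4).mul ((b0.pow 2).add
      ((hasDerivAt_id x).mul ((c1.mul b0).sub (c0.mul b1))))) ?_
    simp only [Pi.mul_apply, Pi.add_apply, Pi.sub_apply, Pi.pow_apply, id]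
    push_cast
    linear_combination auxps auxp x * o2 - auxps auxq x * o1
  have := isOpen_Ioo.is_const_of_deriv_eq_zero (𝕜 := ℝ) (s := Set.Ioo (-1:ℝ) 1) isPreconnected_Ioo
    (fun x hx => (hder x hx).differentiableAt.differentiableWithinAt)
    (fun x hx => (hder x hx).deriv) (abs_lt.1 hs) (show (0:ℝ) ∈ Set.Ioo (-1:ℝ) 1 by simp)
  rw [this]
  simp [auxps_zero, auxp]

theorem aux_wr {u u1 u2 v v1 v2 : ℝ → ℝ}
    (hu : ∀ s ∈ Set.Ioo (0:ℝ) 1, HasDerivAt u (u1 s) s)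
    (hu1 : ∀ s ∈ Set.Ioo (0:ℝ) 1, HasDerivAt u1 (u2 s) s)
    (hv : ∀ s ∈ Set.Ioo (0:ℝ) 1, HasDerivAt v (v1 s) s)
    (hv1 : ∀ s ∈ Set.Ioo (0:ℝ) 1, HasDerivAt v1 (v2 s) s)
    (ou : ∀ s ∈ Set.Ioo (0:ℝ) 1, s * (4 + s) * u2 s + (4 + 2 * s) * u1 s - 3 / 4 * u s = 0)
    (ov : ∀ s ∈ Set.Ioo (0:ℝ) 1, s * (4 + s) * v2 s + (4 + 2 * s) * v1 s - 3 / 4 * v s = 0) :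
    ∃ c : ℝ, ∀ s ∈ Set.Ioo (0:ℝ) 1, s * (4 + s) * (u1 s * v s - u s * v1 s) = c := by
  have hder : ∀ x ∈ Set.Ioo (0:ℝ) 1,
      HasDerivAt (fun s => s * (4 + s) * (u1 s * v s - u s * v1 s)) 0 x := by
    intro x hx
    refine HasDerivAt.congr_deriv (((hasDerivAt_id x).mul ((hasDerivAt_id x).const_add 4)).mul
      (((hu1 x hx).mul (hv x hx)).sub ((hu x hx).mul (hv1 x hx)))) ?_
    simp only [Pi.mul_apply, Pi.add_apply, Pi.sub_apply, id]
    linear_combination v x * ou x hx - u x * ov x hx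
  exact isOpen_Ioo.exists_is_const_of_deriv_eq_zero (𝕜 := ℝ) isPreconnected_Ioo
    (fun x hx => (hder x hx).differentiableAt.differentiableWithinAt)
    (fun x hx => (hder x hx).deriv)

theorem aux_repr : ∃ α β : ℝ, ∀ s ∈ Set.Ioo (0:ℝ) 1,
    Fprof s = α * auxps auxp s + β * (auxps auxp s * Real.log s + auxps auxq s) := by
  have habs : ∀ s ∈ Set.Ioo (0:ℝ) 1, |s| < 1 := fun s hs => by
    rw [abs_of_pos hs.1]; exact hs.2
  have hu : ∀ s ∈ Set.Ioo (0:ℝ) 1, HasDerivAt (auxG (-1/2)) (-1/2 * auxG (-3/2) s) s := by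
    intro s hs
    have := auxG_deriv (p := -1/2) (by norm_num) hs.1
    rwa [show (-1/2 - 1 : ℝ) = -3/2 by norm_num] at this
  have hu1 : ∀ s ∈ Set.Ioo (0:ℝ) 1, HasDerivAt (fun s => -1/2 * auxG (-3/2) s)
      (3 / 4 * auxG (-5/2) s) s := by
    intro s hs
    have := (auxG_deriv (p := -3/2) (by norm_num) hs.1).const_mul (-1/2)
    rw [show (-3/2 - 1 : ℝ) = -5/2 by norm_num] at this
    exact this.congr_deriv (by ring)
  have hB : ∀ s ∈ Set.Ioo (0:ℝ) 1, HasDerivAt (auxps auxp) (auxps (auxdc auxp) s) s :=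
    fun s hs => auxps_deriv auxPG_p (habs s hs)
  have hB1 : ∀ s ∈ Set.Ioo (0:ℝ) 1, HasDerivAt (auxps (auxdc auxp))
      (auxps (auxdc (auxdc auxp)) s) s :=
    fun s hs => auxps_deriv (auxPG_dc auxPG_p) (habs s hs)
  have hC : ∀ s ∈ Set.Ioo (0:ℝ) 1, HasDerivAt (auxps auxq) (auxps (auxdc auxq) s) s :=
    fun s hs => auxps_deriv auxPG_q (habs s hs)
  have hC1 : ∀ s ∈ Set.Ioo (0:ℝ) 1, HasDerivAt (auxps (auxdc auxq))
      (auxps (auxdc (auxdc auxq)) s) s :=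
    fun s hs => auxps_deriv (auxPG_dc auxPG_q) (habs s hs)
  have hL : ∀ s ∈ Set.Ioo (0:ℝ) 1, HasDerivAt (fun s => auxps auxp s * Real.log s + auxps auxq s)
      (auxps (auxdc auxp) s * Real.log s + auxps auxp s * s⁻¹ + auxps (auxdc auxq) s) s :=
    fun s hs => ((hB s hs).mul (Real.hasDerivAt_log hs.1.ne')).add (hC s hs)
  have hL1 : ∀ s ∈ Set.Ioo (0:ℝ) 1, HasDerivAt
      (fun s => auxps (auxdc auxp) s * Real.log s + auxps auxp s * s⁻¹ + auxps (auxdc auxq) s)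
      (auxps (auxdc (auxdc auxp)) s * Real.log s + auxps (auxdc auxp) s * s⁻¹
        + (auxps (auxdc auxp) s * s⁻¹ + auxps auxp s * (-(s ^ 2)⁻¹))
        + auxps (auxdc (auxdc auxq)) s) s :=
    fun s hs => (((hB1 s hs).mul (Real.hasDerivAt_log hs.1.ne')).add
      ((hB s hs).mul (hasDerivAt_inv hs.1.ne'))).add (hC1 s hs)
  have oB := fun s hs => auxp_ode (habs s hs)
  obtain ⟨c, hc⟩ := aux_wr hu hu1 hB hB1 (fun s hs => auxG_ode hs.1) oB
  obtain ⟨d, hd⟩ := aux_wr hu hu1 hL hL1 (fun s hs => auxG_ode hs.1) (by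
    intro s hs
    have o1 := oB s hs
    have o2 := auxq_ode (habs s hs)
    have hs0 : s * s⁻¹ = 1 := mul_inv_cancel₀ hs.1.ne'
    have hs0' : s * (s ^ 2)⁻¹ = s⁻¹ := by
      have := hs.1.ne'
      field_simp
    linear_combination Real.log s * o1 + o2 + (2 * (4 + s) * auxps (auxdc auxp) s
      + 2 * auxps auxp s - auxps auxp s) * hs0 - (4 + s) * auxps auxp s * hs0')
  refine ⟨-d / 4, c / 4, fun s hs => ?_⟩
  rw [Fprof_eq hs.1]
  have hK := aux_K (habs s hs)
  have h1 := hc s hs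
  have h2 := hd s hs
  have hs0 : s * s⁻¹ = 1 := mul_inv_cancel₀ hs.1.ne'
  rw [← h1, ← h2]
  linear_combination (-1/4) * auxG (-1/2) s * hK - (1/4) * auxG (-1/2) s * (4 + s) * auxps auxp s ^ 2 * hs0

open Filter Topology in
theorem aux_repr' : ∀ s ∈ Set.Ioo (0:ℝ) 1,
    Fprof s = (Real.log 8 - 2) * auxps auxp s
      + (-1/2) * (auxps auxp s * Real.log s + auxps auxq s) := by
  obtain ⟨α, β, h⟩ := aux_repr
  have hcont : ∀ {c : ℕ → ℝ}, auxPG c → Tendsto (auxps c) (𝓝[>] 0) (𝓝 (c 0)) := by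
    intro c hc
    have := (auxps_deriv hc (s := 0) (by simp)).continuousAt.tendsto
    rw [auxps_zero] at this
    exact this.mono_left nhdsWithin_le_nhds
  have hB := hcont auxPG_p
  have hC := hcont auxPG_q
  have hS := hcont (auxPG_shift auxPG_p)
  have hlog : Tendsto (fun x : ℝ => Real.log x * x) (𝓝[>] 0) (𝓝 0) := by
    simpa using tendsto_log_mul_rpow_nhdsGT_zero zero_lt_one
  have hrest : Tendsto (fun s => α * auxps auxp s + β *
      (auxps (fun n => auxp (n + 1)) s * (Real.log s * s) + auxps auxq s)) (𝓝[>] 0) (𝓝 α) := by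
    have := (hB.const_mul α).add (((hS.mul hlog).add hC).const_mul β)
    simpa [auxp, auxq] using this
  have hl : Tendsto (fun s => (β + 1 / 2) * Real.log s) (𝓝[>] 0) (𝓝 (Real.log 8 - 2 - α)) := by
    refine (Fprof_asymp.sub hrest).congr' ?_
    filter_upwards [Ioo_mem_nhdsGT (zero_lt_one' ℝ)] with s hs
    have habs : |s| < 1 := by rw [abs_of_pos hs.1]; exact hs.2
    have e : auxps auxp s = 1 + s * auxps (fun n => auxp (n + 1)) s := by
      have h1 := aux_shift (e := fun n => if n = 0 then 0 else auxp n)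
        (auxPG_hasSum (auxPG_shift auxPG_p) habs) (by simp) (by simp)
      have h2 : HasSum (fun n : ℕ => (if n = 0 then (1:ℝ) else 0)) 1 := hasSum_ite_eq 0 1
      refine (auxPG_hasSum auxPG_p habs).unique ((h2.add h1).congr_fun ?_)
      intro n
      rcases eq_or_ne n 0 with rfl | hn
      · simp [auxp]
      · simp [hn]
    rw [h s hs]
    linear_combination β * Real.log s * e
  have hβ : β + 1 / 2 = 0 := by
    by_contra hne
    have hbot := Real.tendsto_log_nhdsGT_zero
    have := hl.const_mul (β + 1 / 2)⁻¹
    refine not_tendsto_nhds_of_tendsto_atBot hbot _ (this.congr fun s => ?_)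
    rw [← mul_assoc, inv_mul_cancel₀ hne, one_mul]
  have hα : Real.log 8 - 2 - α = 0 := by
    simp only [hβ, zero_mul] at hl
    exact tendsto_nhds_unique hl tendsto_const_nhds
  intro s hs
  rw [h s hs, show β = -1/2 by linarith, show α = Real.log 8 - 2 by linarith]

/-- `F` admits a convergent log-analytic expansion at `s = 0`:
there are `r > 0` and coefficients `(a_j)_{j≥1}`, `(b_j)_{j≥1}` whose power series
converge absolutely on `(0,r)`, such that for `s ∈ (0,r)`,
`F(s) = −(1/2) log s + log 8 − 2 + ∑_{j≥1} (a_j s^j + b_j s^j log s)`. -/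
theorem stmt11 :
    ∃ (r : ℝ) (a b : ℕ → ℝ), 0 < r ∧
      (∀ s ∈ Set.Ioo (0 : ℝ) r,
        Summable (fun j : ℕ => |a (j + 1) * s ^ (j + 1)|) ∧
        Summable (fun j : ℕ => |b (j + 1) * s ^ (j + 1)|)) ∧
      ∀ s ∈ Set.Ioo (0 : ℝ) r,
        Fprof s = -(1 / 2) * Real.log s + Real.log 8 - 2 +
          ∑' j : ℕ, (a (j + 1) * s ^ (j + 1) + b (j + 1) * s ^ (j + 1) * Real.log s) := by
  refine ⟨1, fun n => (Real.log 8 - 2) * auxp n + (-1/2) * auxq n, fun n => (-1/2) * auxp n,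
    one_pos, ?_, ?_⟩
  · intro s hs
    have habs : |s| < 1 := by rw [abs_of_pos hs.1]; exact hs.2
    have hp := (summable_nat_add_iff 1).2 (auxPG_summable auxPG_p habs).of_abs
    have hq := (summable_nat_add_iff 1).2 (auxPG_summable auxPG_q habs).of_abs
    constructor
    · refine (((hp.mul_left (Real.log 8 - 2)).add (hq.mul_left (-1/2))).congr fun n => ?_).abs
      ring
    · refine ((hp.mul_left (-1/2)).congr fun n => ?_).abs
      ring
  · intro s hs
    have habs : |s| < 1 := by rw [abs_of_pos hs.1]; exact hs.2
    have hp := (hasSum_nat_add_iff' 1).2 (auxPG_hasSum auxPG_p habs)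
    have hq := (hasSum_nat_add_iff' 1).2 (auxPG_hasSum auxPG_q habs)
    have hsum := ((hp.mul_left (Real.log 8 - 2)).add (hq.mul_left (-1/2))).add
      (hp.mul_left ((-1/2) * Real.log s))
    have e : (fun j : ℕ => ((Real.log 8 - 2) * auxp (j + 1) + (-1/2) * auxq (j + 1)) * s ^ (j + 1)
        + (-1/2) * auxp (j + 1) * s ^ (j + 1) * Real.log s) = fun j : ℕ =>
        (Real.log 8 - 2) * (auxp (j + 1) * s ^ (j + 1)) + (-1/2) * (auxq (j + 1) * s ^ (j + 1))
        + (-1/2) * Real.log s * (auxp (j + 1) * s ^ (j + 1)) := by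
      ext j
      ring
    simp only [e]
    rw [hsum.tsum_eq, aux_repr' s hs]
    simp only [Finset.sum_range_one, auxp, auxq]
    ring
end

section
/- Fix R > 0 and Z ∈ ℝ. There exist constants C > 0 and ρ₀ ∈ (0, R) such that the following holds for every ρ ∈ (0, ρ₀): if B = B_ρ((R,Z)) ⊂ ℝ² and φ ∈ C²(B) ∩ C¹(closure of B) satisfies div(x₁ ∇φ) = 0 in B and n·∇φ = n·e₁ − ρ/(2R) on ∂B (n the outward unit normal), then |∫_B x₁ |∇φ(x)|² dx − π R ρ²| ≤ C ρ³. -/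
open MeasureTheory

/-- The center `(R,Z)` as a point of the Euclidean plane. -/
noncomputable def ctr (R Z : ℝ) : EuclideanSpace ℝ (Fin 2) :=
  (EuclideanSpace.equiv (Fin 2) ℝ).symm ![R, Z]

open Filter Topology

abbrev EE : Type := EuclideanSpace ℝ (Fin 2)

lemma int_fderiv_zero (g : EE → ℝ) (hg : ContDiff ℝ 1 g) (hs : HasCompactSupport g) (v : EE) :
    Integrable (fun x => fderiv ℝ g x v) ∧ ∫ x, fderiv ℝ g x v = 0 := by
  have hc : Continuous (fun x => fderiv ℝ g x v) :=
    (hg.continuous_fderiv (by norm_num)).clm_apply continuous_const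
  have hI : Integrable (fun x => fderiv ℝ g x v) :=
    hc.integrable_of_hasCompactSupport (hs.fderiv_apply ℝ v)
  refine ⟨hI, ?_⟩
  have := integral_mul_fderiv_eq_neg_fderiv_mul_of_integrable (μ := (volume : Measure EE))
    (f := fun _ : EE => (1 : ℝ)) (g := g) (v := v) (by simp) (by simpa using hI)
    (by simpa using hg.continuous.integrable_of_hasCompactSupport hs)
    (fun x _ => differentiableAt_const _) (fun x _ => (hg.differentiable (by norm_num)) x)
  simpa using this

lemma st_deriv_zero_left {t : ℝ} (ht : t < 0) : deriv Real.smoothTransition t = 0 := by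
  have : Real.smoothTransition =ᶠ[𝓝 t] fun _ => (0 : ℝ) := by
    filter_upwards [Iio_mem_nhds ht] with y hy
    exact Real.smoothTransition.zero_of_nonpos (le_of_lt hy)
  rw [this.deriv_eq]; simp

lemma st_deriv_zero_right {t : ℝ} (ht : 1 < t) : deriv Real.smoothTransition t = 0 := by
  have : Real.smoothTransition =ᶠ[𝓝 t] fun _ => (1 : ℝ) := by
    filter_upwards [Ioi_mem_nhds ht] with y hy
    exact Real.smoothTransition.one_of_one_le (le_of_lt hy)
  rw [this.deriv_eq]; simp

lemma st_contDiff : ContDiff ℝ 1 Real.smoothTransition :=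
  Real.smoothTransition.contDiff (n := 1)

lemma st_deriv_bdd : ∃ M > 0, ∀ t, |deriv Real.smoothTransition t| ≤ M := by
  have hc : Continuous (deriv Real.smoothTransition) := st_contDiff.continuous_deriv (by norm_num)
  obtain ⟨M, hM⟩ := (isCompact_Icc (a := (0 : ℝ)) (b := 1)).exists_bound_of_continuousOn
    hc.continuousOn
  refine ⟨max M 1, by positivity, fun t => ?_⟩
  by_cases h0 : t < 0
  · rw [st_deriv_zero_left h0]; simp
  by_cases h1 : 1 < t
  · rw [st_deriv_zero_right h1]; simp
  exact (hM t ⟨not_lt.1 h0, not_lt.1 h1⟩).trans (le_max_left _ _)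

lemma vol_ball (c : EE) {r : ℝ} (hr : 0 ≤ r) : volume.real (Metric.ball c r) = Real.pi * r ^ 2 := by
  rw [Measure.real, EuclideanSpace.volume_ball_fin_two]
  simp [ENNReal.toReal_ofReal hr, ENNReal.toReal_ofReal Real.pi_pos.le, mul_comm]

lemma vol_cball (c : EE) {r : ℝ} (hr : 0 ≤ r) :
    volume.real (Metric.closedBall c r) = Real.pi * r ^ 2 := by
  rw [Measure.real, EuclideanSpace.volume_closedBall_fin_two]
  simp [ENNReal.toReal_ofReal hr, ENNReal.toReal_ofReal Real.pi_pos.le, mul_comm]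

lemma shell_vol (c : EE) {a b : ℝ} (ha : 0 ≤ a) (hab : a ≤ b) :
    volume.real (Metric.closedBall c (√b) \ Metric.ball c (√a)) = Real.pi * (b - a) := by
  rw [measureReal_sdiff (Metric.ball_subset_closedBall.trans
    (Metric.closedBall_subset_closedBall (Real.sqrt_le_sqrt hab))) measurableSet_ball
    measure_closedBall_lt_top.ne,
    vol_ball _ (Real.sqrt_nonneg _), vol_cball _ (Real.sqrt_nonneg _), Real.sq_sqrt ha,
    Real.sq_sqrt (ha.trans hab)]
  ring

lemma shell_lim (c : EE) {ρ : ℝ} (hρ : 0 < ρ) (G : EE → ℝ)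
    (hG : ContinuousOn G (Metric.closedBall c ρ)) (h0 : ∀ x, dist x c = ρ → G x = 0) :
    Tendsto (fun n : ℕ => ∫ x in Metric.ball c ρ,
      G x * (2 * n * deriv Real.smoothTransition (n * (ρ ^ 2 - dist x c ^ 2) - 1)))
      atTop (𝓝 0) := by
  obtain ⟨M, hM0, hM⟩ := st_deriv_bdd
  rw [Metric.tendsto_atTop]
  intro e he
  set ε := e / (4 * M * Real.pi) with hε
  have hε0 : 0 < ε := by have := Real.pi_pos; positivity
  obtain ⟨δ, hδ, hδG⟩ : ∃ δ > 0, ∀ x ∈ Metric.closedBall c ρ,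
      ρ ^ 2 - dist x c ^ 2 < δ → |G x| < ε := by
    have hK : IsCompact (Metric.closedBall c ρ ∩ (fun x => |G x|) ⁻¹' Set.Ici ε) :=
      (isCompact_closedBall c ρ).of_isClosed_subset
        (hG.abs.preimage_isClosed_of_isClosed Metric.isClosed_closedBall isClosed_Ici)
        Set.inter_subset_left
    rcases Set.eq_empty_or_nonempty (Metric.closedBall c ρ ∩ (fun x => |G x|) ⁻¹' Set.Ici ε)
      with h | h
    · refine ⟨1, one_pos, fun x hx _ => ?_⟩
      by_contra hcon
      have : x ∈ (Metric.closedBall c ρ ∩ (fun x => |G x|) ⁻¹' Set.Ici ε) :=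
        ⟨hx, not_lt.1 hcon⟩
      rw [h] at this
      exact this
    · obtain ⟨y, hy, hmin⟩ := hK.exists_isMinOn h
        (f := fun x => ρ ^ 2 - dist x c ^ 2) (by fun_prop)
      refine ⟨ρ ^ 2 - dist y c ^ 2, ?_, fun x hx hlt => ?_⟩
      · have h1 : dist y c ≤ ρ := hy.1
        have h2 : dist y c ≠ ρ := by
          intro h
          have h3 : ε ≤ |G y| := hy.2
          rw [h0 y h, abs_zero] at h3
          linarith
        have h3 : dist y c < ρ := lt_of_le_of_ne h1 h2
        have h4 : 0 ≤ dist y c := dist_nonneg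
        show 0 < _
        nlinarith
      · by_contra hcon
        have := hmin (show x ∈ _ from ⟨hx, not_lt.1 hcon⟩)
        simp only [Set.mem_ofPred_eq] at this
        linarith
  obtain ⟨N, hN⟩ := exists_nat_gt (2 / δ + 2 / ρ ^ 2)
  refine ⟨N, fun n hn => ?_⟩
  have hnR : 2 / δ + 2 / ρ ^ 2 < n := lt_of_lt_of_le hN (by exact_mod_cast hn)
  have hp1 : 0 < 2 / δ := by positivity
  have hp2 : 0 < 2 / ρ ^ 2 := by positivity
  have hn0 : (0 : ℝ) < n := by linarith
  have hnδ : 2 / n < δ := by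
    rw [div_lt_iff₀ hn0, mul_comm, ← div_lt_iff₀ hδ]; linarith
  have hnρ : 2 / n < ρ ^ 2 := by
    rw [div_lt_iff₀ hn0, mul_comm, ← div_lt_iff₀ (by positivity)]; linarith
  have h12 : (1 : ℝ) / n < 2 / n := by gcongr; norm_num
  have h1p : (0 : ℝ) < 1 / n := by positivity
  set S := Metric.closedBall c (√(ρ ^ 2 - 1 / n)) \ Metric.ball c (√(ρ ^ 2 - 2 / n)) with hS
  have hSsub : S ⊆ Metric.ball c ρ := by
    intro x hx
    have : dist x c ≤ √(ρ ^ 2 - 1 / n) := hx.1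
    refine lt_of_le_of_lt this ?_
    rw [Real.sqrt_lt' hρ]; linarith
  have hvS : volume.real S = Real.pi * (1 / n) := by
    rw [hS, shell_vol c (by linarith) (by linarith)]
    congr 1
    field_simp; ring
  rw [setIntegral_eq_of_subset_of_forall_sdiff_eq_zero measurableSet_ball hSsub, dist_zero_right]
  · have hb : ∀ x ∈ S, ‖G x * (2 * n * deriv Real.smoothTransition
        (n * (ρ ^ 2 - dist x c ^ 2) - 1))‖ ≤ ε * (2 * n * M) := by
      intro x hx
      have h2 : ¬ dist x c < √(ρ ^ 2 - 2 / n) := hx.2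
      have h3 : ρ ^ 2 - 2 / n ≤ dist x c ^ 2 := by
        have := not_lt.1 h2
        rwa [Real.sqrt_le_left dist_nonneg] at this
      have hGx := hδG x (Metric.ball_subset_closedBall (hSsub hx)) (by linarith)
      rw [norm_mul, norm_mul, Real.norm_eq_abs, Real.norm_eq_abs, Real.norm_eq_abs,
        abs_of_pos (show (0 : ℝ) < 2 * n by positivity)]
      have := hM (n * (ρ ^ 2 - dist x c ^ 2) - 1)
      gcongr
    have := norm_setIntegral_le_of_norm_le_const (μ := volume) (s := S)
      ((measure_mono hSsub).trans_lt measure_ball_lt_top) hb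
    refine this.trans_lt ?_
    rw [hvS, hε]
    have hpi := Real.pi_pos
    have : e / (4 * M * Real.pi) * (2 * n * M) * (Real.pi * (1 / n)) = e / 2 := by
      field_simp; norm_num
    rw [this]; linarith
  · rintro x ⟨hx, hxS⟩
    have hd : 0 ≤ dist x c := dist_nonneg
    have : deriv Real.smoothTransition (n * (ρ ^ 2 - dist x c ^ 2) - 1) = 0 := by
      by_cases h1 : dist x c ≤ √(ρ ^ 2 - 1 / n)
      · have h2 : dist x c < √(ρ ^ 2 - 2 / n) := by
          by_contra h; exact hxS ⟨h1, h⟩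
        apply st_deriv_zero_right
        rw [Real.lt_sqrt hd] at h2
        have h3 : 2 / n < ρ ^ 2 - dist x c ^ 2 := by linarith
        rw [div_lt_iff₀ hn0] at h3
        linarith
      · apply st_deriv_zero_left
        have h2 := not_le.1 h1
        rw [Real.sqrt_lt' (lt_of_le_of_lt (Real.sqrt_nonneg _) h2)] at h2
        have h3 : ρ ^ 2 - dist x c ^ 2 < 1 / n := by linarith
        rw [lt_div_iff₀ hn0] at h3
        linarith
    rw [this]; simp

noncomputable def cut (c : EE) (ρ : ℝ) (n : ℕ) (x : EE) : ℝ :=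
  Real.smoothTransition (n * (ρ ^ 2 - dist x c ^ 2) - 1)

lemma cut_contDiff (c : EE) (ρ : ℝ) (n : ℕ) : ContDiff ℝ 1 (cut c ρ n) := by
  unfold cut
  refine st_contDiff.comp ?_
  simp only [dist_eq_norm]
  exact ((contDiff_const).mul ((contDiff_const).sub
    ((contDiff_id.sub contDiff_const).norm_sq ℝ))).sub contDiff_const

lemma cut_fderiv (c : EE) (ρ : ℝ) (n : ℕ) (x : EE) (i : Fin 2) :
    fderiv ℝ (cut c ρ n) x (EuclideanSpace.single i 1) =
      - (2 * n * deriv Real.smoothTransition (n * (ρ ^ 2 - dist x c ^ 2) - 1)) * (x i - c i) := by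
  have h1 : HasFDerivAt (fun y : EE => (n : ℝ) * (ρ ^ 2 - dist y c ^ 2) - 1)
      ((n : ℝ) • (- ((2 : ℕ) • (innerSL ℝ (x - c) : EE →L[ℝ] ℝ)))) x := by
    simp only [dist_eq_norm]
    have := ((hasFDerivAt_id x).sub_const c).norm_sq
    exact (((this.const_sub (ρ ^ 2)).const_mul (n : ℝ)).sub_const 1).congr_fderiv (by ext; simp)
  have h2 := (st_contDiff.differentiable (by norm_num)
    ((n : ℝ) * (ρ ^ 2 - dist x c ^ 2) - 1)).hasDerivAt.comp_hasFDerivAt x h1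
  have h3 : HasFDerivAt (cut c ρ n) _ x := h2
  rw [h3.fderiv]
  simp [EuclideanSpace.inner_single_right]
  ring

lemma cut_zero (c : EE) {ρ : ℝ} (hρ : 0 < ρ) (n : ℕ) {x : EE} (hx : x ∉ Metric.ball c ρ) :
    cut c ρ n =ᶠ[𝓝 x] fun _ => 0 := by
  have hx' : ρ ≤ dist x c := not_lt.1 hx
  have hc : Continuous (fun y : EE => (n : ℝ) * (ρ ^ 2 - dist y c ^ 2) - 1) := by fun_prop
  have h0 : (n : ℝ) * (ρ ^ 2 - dist x c ^ 2) - 1 < 0 := by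
    have : ρ ^ 2 - dist x c ^ 2 ≤ 0 := by nlinarith
    have := mul_nonpos_of_nonneg_of_nonpos (Nat.cast_nonneg (α := ℝ) n) this
    linarith
  filter_upwards [hc.continuousAt.eventually (Iio_mem_nhds h0)] with y hy
  exact Real.smoothTransition.zero_of_nonpos (le_of_lt hy)

lemma cut_mul (c : EE) {ρ : ℝ} (hρ : 0 < ρ) (n : ℕ) (h : EE → ℝ)
    (hh : ContDiffOn ℝ 1 h (Metric.ball c ρ)) :
    ContDiff ℝ 1 (fun x => cut c ρ n x * h x) ∧
    HasCompactSupport (fun x => cut c ρ n x * h x) := by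
  constructor
  · rw [contDiff_iff_contDiffAt]
    intro x
    by_cases hx : x ∈ Metric.ball c ρ
    · exact (cut_contDiff c ρ n).contDiffAt.mul (hh.contDiffAt (Metric.isOpen_ball.mem_nhds hx))
    · refine (contDiffAt_const (c := (0 : ℝ))).congr_of_eventuallyEq ?_
      filter_upwards [cut_zero c hρ n hx] with y hy
      simp [hy]
  · refine HasCompactSupport.of_support_subset_isCompact (isCompact_closedBall c ρ) ?_
    intro x hx
    by_contra hcon
    have := (cut_zero c hρ n (x := x) (fun h => hcon (Metric.ball_subset_closedBall h))).self_of_nhds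
    simp [this] at hx

lemma key (c : EE) {ρ : ℝ} (hρ : 0 < ρ) (w F0 F1 : EE → ℝ)
    (hw : ContDiffOn ℝ 1 w (Metric.ball c ρ)) (hwc : ContinuousOn w (Metric.closedBall c ρ))
    (hF0 : ContDiffOn ℝ 1 F0 (Metric.ball c ρ)) (hF0c : ContinuousOn F0 (Metric.closedBall c ρ))
    (hF1 : ContDiffOn ℝ 1 F1 (Metric.ball c ρ)) (hF1c : ContinuousOn F1 (Metric.closedBall c ρ))
    (hI : IntegrableOn (fun x => F0 x * fderiv ℝ w x (EuclideanSpace.single 0 1)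
      + F1 x * fderiv ℝ w x (EuclideanSpace.single 1 1)) (Metric.ball c ρ))
    (hdiv : ∀ x ∈ Metric.ball c ρ, fderiv ℝ F0 x (EuclideanSpace.single 0 1)
      + fderiv ℝ F1 x (EuclideanSpace.single 1 1) = 0)
    (hn : ∀ x, dist x c = ρ → F0 x * (x 0 - c 0) + F1 x * (x 1 - c 1) = 0) :
    ∫ x in Metric.ball c ρ, (F0 x * fderiv ℝ w x (EuclideanSpace.single 0 1)
      + F1 x * fderiv ℝ w x (EuclideanSpace.single 1 1)) = 0 := by
  set D : EE → ℝ := fun x => F0 x * fderiv ℝ w x (EuclideanSpace.single 0 1)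
      + F1 x * fderiv ℝ w x (EuclideanSpace.single 1 1) with hD
  set G : EE → ℝ := fun x => w x * (F0 x * (x 0 - c 0) + F1 x * (x 1 - c 1)) with hGd
  have hG : ContinuousOn G (Metric.closedBall c ρ) := by
    have h0 : ContinuousOn (fun x : EE => x 0 - c 0) (Metric.closedBall c ρ) := by fun_prop
    have h1 : ContinuousOn (fun x : EE => x 1 - c 1) (Metric.closedBall c ρ) := by fun_prop
    exact hwc.mul ((hF0c.mul h0).add (hF1c.mul h1))
  have hlim1 := shell_lim c hρ G hG (fun x hx => by simp [hGd, hn x hx])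
  have hlim2 : Tendsto (fun n : ℕ => ∫ x in Metric.ball c ρ, cut c ρ n x * D x) atTop
      (𝓝 (∫ x in Metric.ball c ρ, D x)) := by
    refine tendsto_integral_of_dominated_convergence (fun x => ‖D x‖) ?_ hI.norm ?_ ?_
    · intro n
      exact (cut_contDiff c ρ n).continuous.aestronglyMeasurable.mul hI.aestronglyMeasurable
    · intro n
      refine Eventually.of_forall fun x => ?_
      rw [norm_mul]
      refine mul_le_of_le_one_left (norm_nonneg _) ?_
      rw [Real.norm_eq_abs, cut, abs_of_nonneg (Real.smoothTransition.nonneg _)]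
      exact Real.smoothTransition.le_one _
    · refine (ae_restrict_iff' measurableSet_ball).2 (Eventually.of_forall fun x hx => ?_)
      have hq : 0 < ρ ^ 2 - dist x c ^ 2 := by
        have h1 : dist x c < ρ := hx
        have h2 : 0 ≤ dist x c := dist_nonneg
        nlinarith
      obtain ⟨N, hN⟩ := exists_nat_gt (2 / (ρ ^ 2 - dist x c ^ 2))
      refine tendsto_const_nhds.congr' ?_
      filter_upwards [eventually_ge_atTop N] with n hn
      have : (2 / (ρ ^ 2 - dist x c ^ 2)) < n := lt_of_lt_of_le hN (by exact_mod_cast hn)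
      rw [div_lt_iff₀ hq] at this
      rw [cut, Real.smoothTransition.one_of_one_le (by linarith), one_mul]
  have hfun : (fun n : ℕ => ∫ x in Metric.ball c ρ, cut c ρ n x * D x) =
      fun n : ℕ => ∫ x in Metric.ball c ρ,
      G x * (2 * n * deriv Real.smoothTransition (n * (ρ ^ 2 - dist x c ^ 2) - 1)) := by
    funext n
    obtain ⟨ha, ha'⟩ := cut_mul c hρ n (fun x => w x * F0 x) (hw.mul hF0)
    obtain ⟨hb, hb'⟩ := cut_mul c hρ n (fun x => w x * F1 x) (hw.mul hF1)
    obtain ⟨i0, e0⟩ := int_fderiv_zero _ ha ha' (EuclideanSpace.single 0 1)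
    obtain ⟨i1, e1⟩ := int_fderiv_zero _ hb hb' (EuclideanSpace.single 1 1)
    have hsum := integral_add i0 i1
    rw [e0, e1, add_zero] at hsum
    rw [← setIntegral_eq_integral_of_forall_compl_eq_zero (s := Metric.ball c ρ)] at hsum
    swap
    · intro x hx
      have z : ∀ h : EE → ℝ, fderiv ℝ (fun x => cut c ρ n x * h x) x = 0 := by
        intro h
        have : (fun x => cut c ρ n x * h x) =ᶠ[𝓝 x] fun _ => (0 : ℝ) := by
          filter_upwards [cut_zero c hρ n hx] with y hy
          simp [hy]
        rw [this.fderiv_eq]; simp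
      rw [z, z]; simp
    have hpt : ∀ x ∈ Metric.ball c ρ,
        fderiv ℝ (fun x => cut c ρ n x * (w x * F0 x)) x (EuclideanSpace.single 0 1)
        + fderiv ℝ (fun x => cut c ρ n x * (w x * F1 x)) x (EuclideanSpace.single 1 1)
        = cut c ρ n x * D x -
         G x * (2 * n * deriv Real.smoothTransition (n * (ρ ^ 2 - dist x c ^ 2) - 1)) := by
      intro x hx
      have hnb := Metric.isOpen_ball.mem_nhds hx
      have dη := ((cut_contDiff c ρ n).differentiable (by norm_num) x).hasFDerivAt
      have dw := ((hw.contDiffAt hnb).differentiableAt (by norm_num)).hasFDerivAt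
      have d0 := ((hF0.contDiffAt hnb).differentiableAt (by norm_num)).hasFDerivAt
      have d1 := ((hF1.contDiffAt hnb).differentiableAt (by norm_num)).hasFDerivAt
      have E0 := (dη.mul (dw.mul d0)).fderiv
      have E1 := (dη.mul (dw.mul d1)).fderiv
      have E0' : fderiv ℝ (fun x => cut c ρ n x * (w x * F0 x)) x = _ := E0
      have E1' : fderiv ℝ (fun x => cut c ρ n x * (w x * F1 x)) x = _ := E1
      rw [E0', E1']
      simp only [add_apply, smul_apply, cut_fderiv,
        smul_eq_mul, hD, hGd, Pi.mul_apply]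
      linear_combination (cut c ρ n x * w x) * hdiv x hx
    rw [setIntegral_congr_fun measurableSet_ball hpt] at hsum
    have hi : IntegrableOn (fun x => cut c ρ n x * D x) (Metric.ball c ρ) := by
      refine hI.norm.mono' ((cut_contDiff c ρ n).continuous.aestronglyMeasurable.mul
        hI.aestronglyMeasurable) (Eventually.of_forall fun x => ?_)
      rw [norm_mul]
      refine mul_le_of_le_one_left (norm_nonneg _) ?_
      rw [Real.norm_eq_abs, cut, abs_of_nonneg (Real.smoothTransition.nonneg _)]
      exact Real.smoothTransition.le_one _
    have hi2 : IntegrableOn (fun x => G x * (2 * n * deriv Real.smoothTransition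
        (n * (ρ ^ 2 - dist x c ^ 2) - 1))) (Metric.ball c ρ) := by
      have hc : Continuous (deriv Real.smoothTransition) :=
        st_contDiff.continuous_deriv (by norm_num)
      have hcc : Continuous (fun x : EE => 2 * n * deriv Real.smoothTransition
        (n * (ρ ^ 2 - dist x c ^ 2) - 1)) := by fun_prop
      exact ((hG.mul hcc.continuousOn).integrableOn_compact (isCompact_closedBall c ρ)).mono_set
        Metric.ball_subset_closedBall
    rw [integral_sub hi hi2] at hsum
    linarith
  rw [hfun] at hlim2
  exact tendsto_nhds_unique hlim2 hlim1

lemma ctr_zero (R Z : ℝ) : (ctr R Z) 0 = R := by simp [ctr]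

lemma ctr_one (R Z : ℝ) : (ctr R Z) 1 = Z := by simp [ctr]

lemma dist_ctr_sq (R Z : ℝ) (x : EE) :
    dist x (ctr R Z) ^ 2 = (x 0 - R) ^ 2 + (x 1 - Z) ^ 2 := by
  rw [dist_eq_norm, EuclideanSpace.real_norm_sq_eq, Fin.sum_univ_two]
  simp [ctr_zero, ctr_one]

lemma hasFDerivAt_coord (i : Fin 2) (x : EE) :
    HasFDerivAt (fun y : EE => y i) (EuclideanSpace.proj i : EE →L[ℝ] ℝ) x :=
  (EuclideanSpace.proj i : EE →L[ℝ] ℝ).hasFDerivAt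

/-- The explicit comparison potential. -/
noncomputable def psi (R Z : ℝ) (y : EE) : ℝ :=
  (y 0 - R) - ((y 0 - R) ^ 2 + (y 1 - Z) ^ 2) * (4 * R)⁻¹

noncomputable def PP0 (R Z ρ : ℝ) (y : EE) : ℝ :=
  y 0 * (1 - (y 0 - R) * (2 * R)⁻¹)
    + (3 * (4 * R)⁻¹) * ((y 0 - R) ^ 2 + (y 1 - Z) ^ 2 - ρ ^ 2)

noncomputable def PP1 (R Z : ℝ) (y : EE) : ℝ := - (y 0 * ((y 1 - Z) * (2 * R)⁻¹))

lemma psi_contDiff (R Z : ℝ) : ContDiff ℝ 2 (psi R Z) := by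
  unfold psi; fun_prop

lemma PP0_contDiff (R Z ρ : ℝ) : ContDiff ℝ 1 (PP0 R Z ρ) := by
  unfold PP0; fun_prop

lemma PP1_contDiff (R Z : ℝ) : ContDiff ℝ 1 (PP1 R Z) := by
  unfold PP1; fun_prop

lemma psi_d (R Z : ℝ) (hR : 0 < R) (x : EE) :
    fderiv ℝ (psi R Z) x (EuclideanSpace.single 0 1) = 1 - (x 0 - R) * (2 * R)⁻¹ ∧
    fderiv ℝ (psi R Z) x (EuclideanSpace.single 1 1) = - ((x 1 - Z) * (2 * R)⁻¹) := by
  have h0 := (hasFDerivAt_coord 0 x).sub_const R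
  have h1 := (hasFDerivAt_coord 1 x).sub_const Z
  have h : HasFDerivAt (psi R Z) _ x := h0.sub (((h0.pow 2).add (h1.pow 2)).mul_const (4 * R)⁻¹)
  rw [h.fderiv]
  constructor
  · simp; field_simp; ring
  · simp; field_simp; ring

lemma PP_div (R Z ρ : ℝ) (hR : 0 < R) (x : EE) :
    fderiv ℝ (PP0 R Z ρ) x (EuclideanSpace.single 0 1)
     + fderiv ℝ (PP1 R Z) x (EuclideanSpace.single 1 1) = 0 := by
  have g0 := (hasFDerivAt_coord 0 x)
  have h0 := (hasFDerivAt_coord 0 x).sub_const R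
  have h1 := (hasFDerivAt_coord 1 x).sub_const Z
  have h : HasFDerivAt (PP0 R Z ρ) _ x :=
    (g0.mul ((h0.mul_const (2 * R)⁻¹).const_sub 1)).add
    ((((h0.pow 2).add (h1.pow 2)).sub_const (ρ ^ 2)).const_mul (3 * (4 * R)⁻¹))
  have h' : HasFDerivAt (PP1 R Z) _ x := (g0.mul (h1.mul_const (2 * R)⁻¹)).neg
  rw [h.fderiv, h'.fderiv]
  simp; field_simp; ring

/-- Pointwise energy bound. -/
lemma ptwise {R ρ s t p q : ℝ} (hR : 0 < R) (hρ : 0 < ρ) (hρR : ρ < R / 2)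
    (hst : s ^ 2 + t ^ 2 < ρ ^ 2) :
    |(R + s) * ((p + (1 - s * (2 * R)⁻¹)) ^ 2 + (q + - (t * (2 * R)⁻¹)) ^ 2) - R|
      ≤ (1 + 2 * R) * ρ + (1 + 1 / ρ) * ((R + s) * (p ^ 2 + q ^ 2)) := by
  have hs1 : -ρ < s ∧ s < ρ := abs_lt.1 (abs_lt_of_sq_lt_sq (by nlinarith [sq_nonneg t]) hρ.le)
  obtain ⟨hsl, hsu⟩ := hs1
  set a := 1 - s * (2 * R)⁻¹ with ha
  set b := - (t * (2 * R)⁻¹) with hb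
  have hX : 0 < R + s := by linarith
  have hA : (R + s) * (a ^ 2 + b ^ 2) - R
      = - s ^ 2 / R + (R + s) * (s ^ 2 + t ^ 2) / (4 * R ^ 2) := by
    rw [ha, hb]; field_simp; ring
  have h1 : 0 ≤ s ^ 2 / R ∧ s ^ 2 / R ≤ ρ / 2 := by
    refine ⟨by positivity, ?_⟩
    rw [div_le_iff₀ hR]; nlinarith [sq_nonneg t]
  have h2 : 0 ≤ (R + s) * (s ^ 2 + t ^ 2) / (4 * R ^ 2) ∧
      (R + s) * (s ^ 2 + t ^ 2) / (4 * R ^ 2) ≤ ρ / 2 := by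
    refine ⟨by positivity, ?_⟩
    rw [div_le_iff₀ (by positivity)]
    have : (R + s) * (s ^ 2 + t ^ 2) ≤ (2 * R) * (ρ * R) := by
      gcongr
      · linarith
      · nlinarith
    nlinarith
  have hneg : - s ^ 2 / R = - (s ^ 2 / R) := by ring
  have hA' : |(R + s) * (a ^ 2 + b ^ 2) - R| ≤ ρ := by
    rw [hA, hneg, abs_le]; constructor <;> linarith [h1.1, h1.2, h2.1, h2.2]
  have hA2 : (R + s) * (a ^ 2 + b ^ 2) ≤ 2 * R := by
    have := (abs_le.1 hA').2; linarith
  have hcross : |2 * (p * a + q * b)| ≤ ρ * (a ^ 2 + b ^ 2) + 1 / ρ * (p ^ 2 + q ^ 2) := by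
    have e1 : ρ * (a ^ 2 + b ^ 2) + 1 / ρ * (p ^ 2 + q ^ 2) - 2 * (p * a + q * b)
      = 1 / ρ * ((ρ * a - p) ^ 2 + (ρ * b - q) ^ 2) := by field_simp; ring
    have e2 : ρ * (a ^ 2 + b ^ 2) + 1 / ρ * (p ^ 2 + q ^ 2) + 2 * (p * a + q * b)
      = 1 / ρ * ((ρ * a + p) ^ 2 + (ρ * b + q) ^ 2) := by field_simp; ring
    have p1 : 0 ≤ 1 / ρ * ((ρ * a - p) ^ 2 + (ρ * b - q) ^ 2) := by positivity
    have p2 : 0 ≤ 1 / ρ * ((ρ * a + p) ^ 2 + (ρ * b + q) ^ 2) := by positivity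
    rw [abs_le]; constructor <;> linarith
  have hc2 : |(R + s) * (2 * (p * a + q * b))|
      ≤ ρ * (2 * R) + 1 / ρ * ((R + s) * (p ^ 2 + q ^ 2)) := by
    rw [abs_mul, abs_of_pos hX]
    calc _ ≤ (R + s) * (ρ * (a ^ 2 + b ^ 2) + 1 / ρ * (p ^ 2 + q ^ 2)) := by gcongr
      _ = ρ * ((R + s) * (a ^ 2 + b ^ 2)) + 1 / ρ * ((R + s) * (p ^ 2 + q ^ 2)) := by ring
      _ ≤ _ := by gcongr
  have hpq : 0 ≤ (R + s) * (p ^ 2 + q ^ 2) := by positivity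
  have hdec : (R + s) * ((p + a) ^ 2 + (q + b) ^ 2) - R
      = ((R + s) * (a ^ 2 + b ^ 2) - R) + (R + s) * (2 * (p * a + q * b))
        + (R + s) * (p ^ 2 + q ^ 2) := by ring
  rw [hdec]
  have t1 := abs_add_le (((R + s) * (a ^ 2 + b ^ 2) - R) + (R + s) * (2 * (p * a + q * b)))
    ((R + s) * (p ^ 2 + q ^ 2))
  have t2 := abs_add_le ((R + s) * (a ^ 2 + b ^ 2) - R) ((R + s) * (2 * (p * a + q * b)))
  rw [abs_of_nonneg hpq] at t1
  linarith

set_option maxHeartbeats 2000000 in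
/-- Quantitative asymptotics of the interior kinetic energy: for fixed `R > 0`, `Z`,
there are `C > 0` and `ρ₀ ∈ (0,R)` such that for every `ρ ∈ (0,ρ₀)` and every
`φ ∈ C²(B) ∩ C¹(B̄)` on `B = B_ρ((R,Z))` with `div(x₁∇φ) = 0` in `B` and
`n·∇φ = n·e₁ − ρ/(2R)` on `∂B`, one has `|∫_B x₁|∇φ|² − πRρ²| ≤ Cρ³`. -/
theorem stmt17 (R Z : ℝ) (hR : 0 < R) :
    ∃ C > (0 : ℝ), ∃ ρ₀ ∈ Set.Ioo (0 : ℝ) R, ∀ ρ ∈ Set.Ioo (0 : ℝ) ρ₀,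
      ∀ φ : EuclideanSpace ℝ (Fin 2) → ℝ,
        ContDiffOn ℝ 2 φ (Metric.ball (ctr R Z) ρ) →
        ContDiffOn ℝ 1 φ (Metric.closedBall (ctr R Z) ρ) →
        (∀ x ∈ Metric.ball (ctr R Z) ρ,
          fderiv ℝ (fun y : EuclideanSpace ℝ (Fin 2) =>
              y 0 * fderiv ℝ φ y (EuclideanSpace.single 0 1)) x (EuclideanSpace.single 0 1)
            + fderiv ℝ (fun y : EuclideanSpace ℝ (Fin 2) =>
              y 0 * fderiv ℝ φ y (EuclideanSpace.single 1 1)) x (EuclideanSpace.single 1 1)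
            = 0) →
        (∀ x : EuclideanSpace ℝ (Fin 2), dist x (ctr R Z) = ρ →
          fderivWithin ℝ φ (Metric.closedBall (ctr R Z) ρ) x (ρ⁻¹ • (x - ctr R Z))
            = ρ⁻¹ * (x 0 - R) - ρ / (2 * R)) →
        |(∫ x in Metric.ball (ctr R Z) ρ,
            x 0 * ((fderiv ℝ φ x (EuclideanSpace.single 0 1)) ^ 2
              + (fderiv ℝ φ x (EuclideanSpace.single 1 1)) ^ 2))
          - Real.pi * R * ρ ^ 2| ≤ C * ρ ^ 3 := by
  have hpi := Real.pi_pos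
  refine ⟨Real.pi * (1 + 2 * R) + 2 * Real.pi * (1 + 1 / R), by positivity, R / 2,
    ⟨by linarith, by linarith⟩, ?_⟩
  rintro ρ ⟨hρ, hρR⟩ φ h2 h1 hpde hbc
  set c := ctr R Z with hc
  set B := Metric.ball c ρ with hB
  set K := Metric.closedBall c ρ with hK
  have hBK : B ⊆ K := Metric.ball_subset_closedBall
  have hud : UniqueDiffOn ℝ K := uniqueDiffOn_convex (convex_closedBall c ρ)
    ⟨c, Metric.ball_subset_interior_closedBall (Metric.mem_ball_self hρ)⟩
  set Dw : EE → EE → ℝ := fun v x => fderivWithin ℝ φ K x v with hDw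
  have hDwB : ∀ v, ∀ x ∈ B, Dw v x = fderiv ℝ φ x v := by
    intro v x hx
    rw [hDw]
    simp only
    rw [fderivWithin_of_mem_nhds (mem_of_superset (Metric.isOpen_ball.mem_nhds hx) hBK)]
  have hDwc : ∀ v, ContinuousOn (Dw v) K := fun v =>
    (h1.continuousOn_fderivWithin hud le_rfl).clm_apply continuousOn_const
  have hDw1 : ∀ v, ContDiffOn ℝ 1 (Dw v) B := fun v =>
    ((h2.fderiv_of_isOpen Metric.isOpen_ball (m := 1) (by norm_num)).clm_apply
      contDiffOn_const).congr (hDwB v)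
  set e0 : EE := EuclideanSpace.single 0 1 with he0
  set e1 : EE := EuclideanSpace.single 1 1 with he1
  set F0 : EE → ℝ := fun x => x 0 * Dw e0 x - PP0 R Z ρ x with hF0
  set F1 : EE → ℝ := fun x => x 0 * Dw e1 x - PP1 R Z x with hF1
  set w : EE → ℝ := fun x => φ x - psi R Z x with hw
  have hx0 : ContDiff ℝ 1 (fun x : EE => x 0) := by fun_prop
  have hwd : ∀ x ∈ B, fderiv ℝ w x e0 = Dw e0 x - (1 - (x 0 - R) * (2 * R)⁻¹) ∧
      fderiv ℝ w x e1 = Dw e1 x - (- ((x 1 - Z) * (2 * R)⁻¹)) := by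
    intro x hx
    have d1 := ((h2.contDiffAt (Metric.isOpen_ball.mem_nhds hx)).differentiableAt
      (by norm_num)).hasFDerivAt
    have d2 := ((psi_contDiff R Z).differentiable (by norm_num) x).hasFDerivAt
    have d3 : HasFDerivAt w _ x := d1.sub d2
    rw [d3.fderiv, hDwB _ x hx, hDwB _ x hx, ← (psi_d R Z hR x).1, ← (psi_d R Z hR x).2]
    exact ⟨rfl, rfl⟩
  set p : EE → ℝ := fun x => Dw e0 x - (1 - (x 0 - R) * (2 * R)⁻¹) with hp
  set q : EE → ℝ := fun x => Dw e1 x - (- ((x 1 - Z) * (2 * R)⁻¹)) with hq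
  have hpc : ContinuousOn p K := (hDwc e0).sub (by fun_prop)
  have hqc : ContinuousOn q K := (hDwc e1).sub (by fun_prop)
  have hF0c : ContinuousOn F0 K :=
    (hx0.continuous.continuousOn.mul (hDwc e0)).sub (PP0_contDiff R Z ρ).continuous.continuousOn
  have hF1c : ContinuousOn F1 K :=
    (hx0.continuous.continuousOn.mul (hDwc e1)).sub (PP1_contDiff R Z).continuous.continuousOn
  have hintB : ∀ f : EE → ℝ, ContinuousOn f K → IntegrableOn f B := fun f hf =>
    (hf.integrableOn_compact (isCompact_closedBall c ρ)).mono_set hBK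
  have hxK : ContinuousOn (fun x : EE => x 0) K := hx0.continuous.continuousOn
  have hkey := key c hρ w F0 F1 ((h2.of_le (by norm_num)).sub
      ((psi_contDiff R Z).of_le (by norm_num)).contDiffOn)
    (h1.continuousOn.sub (psi_contDiff R Z).continuous.continuousOn)
    ((hx0.contDiffOn.mul (hDw1 e0)).sub (PP0_contDiff R Z ρ).contDiffOn) hF0c
    ((hx0.contDiffOn.mul (hDw1 e1)).sub (PP1_contDiff R Z).contDiffOn) hF1c
    ((hintB (fun x => F0 x * p x + F1 x * q x) ((hF0c.mul hpc).add (hF1c.mul hqc))).congr_fun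
      (fun x hx => by rw [(hwd x hx).1, (hwd x hx).2]) measurableSet_ball)
    (by
      intro x hx
      have hnb := Metric.isOpen_ball.mem_nhds hx
      have g : ∀ v : EE, DifferentiableAt ℝ (fun y : EE => y 0 * fderiv ℝ φ y v) x := by
        intro v
        have : ContDiffOn ℝ 1 (fun y : EE => y 0 * fderiv ℝ φ y v) B :=
          hx0.contDiffOn.mul ((h2.fderiv_of_isOpen Metric.isOpen_ball (m := 1)
            (by norm_num)).clm_apply contDiffOn_const)
        exact (this.contDiffAt hnb).differentiableAt (by norm_num)
      have d0 := (g e0).hasFDerivAt.sub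
        ((PP0_contDiff R Z ρ).differentiable (by norm_num) x).hasFDerivAt
      have d1 := (g e1).hasFDerivAt.sub
        ((PP1_contDiff R Z).differentiable (by norm_num) x).hasFDerivAt
      have c0 : F0 =ᶠ[𝓝 x] ((fun y : EE => y 0 * fderiv ℝ φ y e0) - PP0 R Z ρ) := by
        filter_upwards [hnb] with y hy
        simp only [hF0, Pi.sub_apply, hDwB _ y hy]
      have c1 : F1 =ᶠ[𝓝 x] ((fun y : EE => y 0 * fderiv ℝ φ y e1) - PP1 R Z) := by
        filter_upwards [hnb] with y hy
        simp only [hF1, Pi.sub_apply, hDwB _ y hy]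
      rw [c0.fderiv_eq, c1.fderiv_eq, d0.fderiv, d1.fderiv]
      have := hpde x hx
      have := PP_div R Z ρ hR x
      simp only [sub_apply]
      linarith)
    (by
      intro x hx
      have hb := hbc x hx
      have hd := dist_ctr_sq R Z x
      rw [← hc, hx] at hd
      have hv : x - c = (x 0 - R) • e0 + (x 1 - Z) • e1 := by
        ext i
        fin_cases i
        · simp [hc, ctr_zero, he0, he1]
        · simp [hc, ctr_one, he0, he1]
      rw [hv] at hb
      simp only [map_smul, map_add, smul_eq_mul] at hb
      have hb' : (x 0 - R) * Dw e0 x + (x 1 - Z) * Dw e1 x = (x 0 - R) - ρ ^ 2 / (2 * R) := by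
        simp only [hDw]
        field_simp at hb ⊢
        linarith
      simp only [hF0, hF1, PP0, PP1]
      rw [hc, ctr_zero, ctr_one, ← hd]
      have e : (2 * R)⁻¹ * 2 * R = 1 := by field_simp
      have e2 : ρ ^ 2 / (2 * R) = ρ ^ 2 * (2 * R)⁻¹ := by rw [div_eq_mul_inv]
      rw [e2] at hb'
      linear_combination x 0 * hb' - x 0 * (2 * R)⁻¹ * hd)
  have hdst : ∀ x ∈ B, (x 0 - R) ^ 2 + (x 1 - Z) ^ 2 < ρ ^ 2 := by
    intro x hx
    rw [← dist_ctr_sq]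
    have hx' : dist x (ctr R Z) < ρ := hx
    have := dist_nonneg (x := x) (y := ctr R Z)
    nlinarith
  have hvol : volume.real B = Real.pi * ρ ^ 2 := vol_ball c hρ.le
  have hBfin : volume B ≠ ⊤ := measure_ball_lt_top.ne
  have hconst : ∀ a : ℝ, IntegrableOn (fun _ : EE => a) B := fun a => hintB _ continuousOn_const
  set A := ∫ x in B, x 0 * (p x ^ 2 + q x ^ 2) with hA
  have hAi : IntegrableOn (fun x => x 0 * (p x ^ 2 + q x ^ 2)) B :=
    hintB _ (hxK.mul ((hpc.pow 2).add (hqc.pow 2)))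
  set k := 3 * (4 * R)⁻¹ with hk
  have hA1 : A ≤ A / 2 + (k ^ 2 * ρ ^ 4 / R) * (Real.pi * ρ ^ 2) := by
    have hpt : ∀ x ∈ B, x 0 * (p x ^ 2 + q x ^ 2) - (F0 x * fderiv ℝ w x e0
        + F1 x * fderiv ℝ w x e1) ≤ (1 / 2) * (x 0 * (p x ^ 2 + q x ^ 2))
          + k ^ 2 * ρ ^ 4 / R := by
      intro x hx
      rw [(hwd x hx).1, (hwd x hx).2]
      change _ - (F0 x * p x + F1 x * q x) ≤ _
      have hd := hdst x hx
      have hs : -ρ < x 0 - R := (abs_lt.1 (abs_lt_of_sq_lt_sq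
        (by nlinarith [sq_nonneg (x 1 - Z)]) hρ.le)).1
      have hX : R / 2 < x 0 := by linarith
      have f0 : F0 x = x 0 * p x - k * ((x 0 - R) ^ 2 + (x 1 - Z) ^ 2 - ρ ^ 2) := by
        simp only [hF0, hp, PP0, hk]; ring
      have f1 : F1 x = x 0 * q x := by
        simp only [hF1, hq, PP1]; ring
      rw [f0, f1]
      set m := (x 0 - R) ^ 2 + (x 1 - Z) ^ 2 - ρ ^ 2 with hm
      have hm1 : m ^ 2 ≤ ρ ^ 4 := by
        have : -ρ ^ 2 ≤ m := by rw [hm]; nlinarith [sq_nonneg (x 0 - R), sq_nonneg (x 1 - Z)]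
        have : m ≤ 0 := by rw [hm]; linarith
        nlinarith
      have hy : k * m * p x ≤ (1 / 2) * (x 0 * p x ^ 2) + k ^ 2 * ρ ^ 4 / R := by
        have y1 : k ^ 2 * m ^ 2 / R ≤ k ^ 2 * ρ ^ 4 / R := by gcongr
        have y2 : R / 4 * p x ^ 2 ≤ (1 / 2) * (x 0 * p x ^ 2) := by
          nlinarith [sq_nonneg (p x)]
        have y3 : R / 4 * p x ^ 2 + k ^ 2 * m ^ 2 / R - k * m * p x
            = (R / 2 * p x - k * m) ^ 2 / R := by field_simp; ring
        have y4 : 0 ≤ (R / 2 * p x - k * m) ^ 2 / R := by positivity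
        linarith
      have hq0 : 0 ≤ x 0 * q x ^ 2 := mul_nonneg (by linarith) (sq_nonneg _)
      linarith
    have hFi : IntegrableOn (fun x => F0 x * fderiv ℝ w x e0 + F1 x * fderiv ℝ w x e1) B :=
      (hintB (fun x => F0 x * p x + F1 x * q x) ((hF0c.mul hpc).add (hF1c.mul hqc))).congr_fun
      (fun x hx => by rw [(hwd x hx).1, (hwd x hx).2]) measurableSet_ball
    have hmono := setIntegral_mono_on (hAi.sub hFi) ((hAi.const_mul (1 / 2)).add
      (hconst (k ^ 2 * ρ ^ 4 / R))) measurableSet_ball hpt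
    simp only [Pi.sub_apply, Pi.add_apply] at hmono
    rw [integral_sub hAi hFi, hkey, integral_add (hAi.const_mul (1 / 2)) (hconst _),
      integral_const_mul, setIntegral_const, hvol, smul_eq_mul] at hmono
    rw [← hA] at hmono
    linarith
  have hA2 : A ≤ 9 * Real.pi / (8 * R ^ 3) * ρ ^ 6 := by
    have : (k ^ 2 * ρ ^ 4 / R) * (Real.pi * ρ ^ 2) = 9 * Real.pi / (16 * R ^ 3) * ρ ^ 6 := by
      rw [hk]; field_simp; norm_num
    rw [this] at hA1
    have : 9 * Real.pi / (8 * R ^ 3) * ρ ^ 6 = 2 * (9 * Real.pi / (16 * R ^ 3) * ρ ^ 6) := by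
      field_simp; norm_num
    linarith
  -- the energy
  have hEi : IntegrableOn (fun x => x 0 * ((fderiv ℝ φ x e0) ^ 2 + (fderiv ℝ φ x e1) ^ 2)) B :=
    (hintB (fun x => x 0 * (Dw e0 x ^ 2 + Dw e1 x ^ 2))
      (hxK.mul (((hDwc e0).pow 2).add ((hDwc e1).pow 2)))).congr_fun
      (fun x hx => by simp only [hDwB _ x hx]) measurableSet_ball
  have hsubst : (∫ x in B, x 0 * ((fderiv ℝ φ x e0) ^ 2 + (fderiv ℝ φ x e1) ^ 2))
      - Real.pi * R * ρ ^ 2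
      = ∫ x in B, (x 0 * ((fderiv ℝ φ x e0) ^ 2 + (fderiv ℝ φ x e1) ^ 2) - R) := by
    rw [integral_sub hEi (hconst R), setIntegral_const, hvol, smul_eq_mul]
    ring
  rw [hsubst]
  have hEabs : IntegrableOn (fun x => |x 0 * ((fderiv ℝ φ x e0) ^ 2
      + (fderiv ℝ φ x e1) ^ 2) - R|) B := (hEi.sub (hconst R)).abs
  have hbound := (abs_integral_le_integral_abs (μ := volume.restrict B)
      (f := fun x => x 0 * ((fderiv ℝ φ x e0) ^ 2 + (fderiv ℝ φ x e1) ^ 2) - R)).trans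
    (setIntegral_mono_on hEabs
      ((hconst ((1 + 2 * R) * ρ)).add (hAi.const_mul (1 + 1 / ρ))) measurableSet_ball
      (by
        intro x hx
        have := ptwise (p := p x) (q := q x) hR hρ hρR (hdst x hx)
        have r0 : p x + (1 - (x 0 - R) * (2 * R)⁻¹) = fderiv ℝ φ x e0 := by
          rw [← hDwB _ x hx]; simp only [hp]; ring
        have r1 : q x + - ((x 1 - Z) * (2 * R)⁻¹) = fderiv ℝ φ x e1 := by
          rw [← hDwB _ x hx]; simp only [hq]; ring
        rw [r0, r1, add_sub_cancel] at this
        exact this))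
  refine hbound.trans ?_
  simp only [Pi.add_apply]
  rw [integral_add (hconst _) (hAi.const_mul _), setIntegral_const, hvol,
    smul_eq_mul, integral_const_mul (1 + 1 / ρ), ← hA]
  have f1 : (1 + 1 / ρ) * A ≤ (1 + 1 / ρ) * (9 * Real.pi / (8 * R ^ 3) * ρ ^ 6) := by gcongr
  have f2 : (1 + 1 / ρ) * (9 * Real.pi / (8 * R ^ 3) * ρ ^ 6)
      = 9 * Real.pi / (8 * R ^ 3) * (ρ ^ 3 + ρ ^ 2) * ρ ^ 3 := by field_simp
  have f3 : 9 * Real.pi / (8 * R ^ 3) * (ρ ^ 3 + ρ ^ 2) * ρ ^ 3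
      ≤ 9 * Real.pi / (8 * R ^ 3) * (R ^ 3 + R ^ 2) * ρ ^ 3 := by
    have : ρ ≤ R := by linarith
    gcongr
  have f4 : 9 * Real.pi / (8 * R ^ 3) * (R ^ 3 + R ^ 2) * ρ ^ 3
      = 9 / 8 * (Real.pi * (1 + 1 / R) * ρ ^ 3) := by field_simp
  have f5 : 0 ≤ Real.pi * (1 + 1 / R) * ρ ^ 3 := by positivity
  nlinarith
end
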